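/- arXiv:1904.08096 — 2 statements merged into one kernel-verified Lean document; each statement's English description precedes it below -/
import Mathlib

section
/- For all n ∈ ℕ and all a, b ∈ Finset Pk: (M_n)_{a,b} = Σ_{a' ∈ Finset Pk} (S^{n+1})_{(a,∅),(a',b)}. That is, the (n+1)-step behavior of the small-step chain started in state (a,∅) computes the big-step matrix of the n-th unrolling. -/
/-!
Both sides describe the product `f x₀ * f x₁ * ⋯ * f xₙ` collected along a path of the chain `B`
started at `x₀`, where for packet sets `f` is the identity and the product is the union. The
small-step chain multiplies it up from left to right, in an accumulator, while the unrolling builds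
it from right to left. Associativity reconciles the two once the initial accumulator `s` is
arbitrary: started at `(x₀, s)`, the small-step chain yields the distribution of the unrolling
pushed forward along `s * ·`. The last step of the small-step chain emits `f xₙ` and then moves
along a row of `B`, which the sum over end states collapses to `1`.
-/

section

variable {X N R : Type*} [Semiring R]

/-- The small-step matrix of a chain `B` that emits `f x` when it leaves `x`: its states `(x, s)`
pair a state of `B` with the product `s` of the emissions so far. -/
def smallStep [Mul N] [DecidableEq N] (f : X → N) (B : Matrix X X R) :
    Matrix (X × N) (X × N) R :=
  .of fun p q ↦ if q.2 = p.2 * f p.1 then B p.1 q.1 else 0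

/-- The big-step matrices of the unrollings of a loop with body `B`: row `x` of the `n`-th one is
the distribution of the product of the emissions of `n + 1` successive states, the first being `x`.
Prefixing the emission `f x` is a pushforward along `f x * ·`. -/
noncomputable def unrolling [Fintype X] [Finite N] [DecidableEq N] [Mul N] (f : X → N)
    (B : Matrix X X R) : ℕ → Matrix X N R
  | 0 => .of fun x ↦ Pi.single (f x) 1
  | n + 1 => .of fun x ↦ FunOnFinite.linearMap R R (f x * ·) ((B * unrolling f B n) x)

theorem unrolling_zero [Fintype X] [Finite N] [DecidableEq N] [Mul N] (f : X → N)
    (B : Matrix X X R) (x : X) : unrolling f B 0 x = Pi.single (f x) 1 :=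
  rfl

theorem unrolling_succ [Fintype X] [Finite N] [DecidableEq N] [Mul N] (f : X → N)
    (B : Matrix X X R) (n : ℕ) (x : X) :
    unrolling f B (n + 1) x =
      FunOnFinite.linearMap R R (f x * ·) ((B * unrolling f B n) x) :=
  rfl

theorem unrolling_succ_apply [Fintype X] [Fintype N] [DecidableEq N] [Mul N] (f : X → N)
    (B : Matrix X X R) (n : ℕ) (x : X) (b : N) :
    unrolling f B (n + 1) x b =
      ∑ c, (if b = f x * c then 1 else 0) * (B * unrolling f B n) x c := by
  simp [unrolling_succ, FunOnFinite.linearMap_apply_apply, Finset.sum_filter, eq_comm]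

theorem eq_unrolling [Fintype X] [Fintype N] [DecidableEq N] [Mul N] {f : X → N}
    {B : Matrix X X R} {M : ℕ → Matrix X N R} (hzero : ∀ x, M 0 x = Pi.single (f x) 1)
    (hsucc : ∀ n x b, M (n + 1) x b = ∑ c, (if b = f x * c then 1 else 0) * (B * M n) x c) :
    M = unrolling f B := by
  funext n
  induction n with
  | zero => exact funext hzero
  | succ n ih =>
    ext x b
    rw [hsucc, unrolling_succ_apply, ih]

theorem smallStep_mul_apply [Fintype X] [Fintype N] [DecidableEq N] [Mul N] {K : Type*}
    (f : X → N) (B : Matrix X X R) (T : Matrix (X × N) K R) (x : X) (s : N) (k : K) :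
    (smallStep f B * T) (x, s) k = ∑ y, B x y * T (y, s * f x) k := by
  simp [smallStep, Matrix.mul_apply, Fintype.sum_prod_type]

theorem sum_smallStep_apply [Fintype X] [DecidableEq N] [Mul N] (f : X → N) {B : Matrix X X R}
    (hB : ∀ x, ∑ y, B x y = 1) (x : X) (s : N) :
    (fun b ↦ ∑ y, smallStep f B (x, s) (y, b)) = Pi.single (s * f x) 1 := by
  ext b
  simp [smallStep, Pi.single_apply, Finset.sum_ite_irrel, hB]

theorem sum_smallStep_pow_apply [Fintype X] [DecidableEq X] [Fintype N] [DecidableEq N]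
    [Semigroup N] (f : X → N) {B : Matrix X X R} (hB : ∀ x, ∑ y, B x y = 1) (n : ℕ) (x : X)
    (s : N) :
    (fun b ↦ ∑ y, (smallStep f B ^ (n + 1)) (x, s) (y, b)) =
      FunOnFinite.linearMap R R (s * ·) (unrolling f B n x) := by
  induction n generalizing x s with
  | zero => simp [sum_smallStep_apply f hB, unrolling_zero]
  | succ n ih =>
    calc (fun b ↦ ∑ y, (smallStep f B ^ (n + 1 + 1)) (x, s) (y, b))
      _ = ∑ z, B x z • fun b ↦ ∑ y, (smallStep f B ^ (n + 1)) (z, s * f x) (y, b) := by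
        ext b
        simp only [pow_succ' _ (n + 1), smallStep_mul_apply, Finset.sum_apply, Pi.smul_apply,
          smul_eq_mul, Finset.mul_sum]
        exact Finset.sum_comm
      _ = ∑ z, B x z • FunOnFinite.linearMap R R (s * f x * ·) (unrolling f B n z) := by
        simp only [ih]
      _ = FunOnFinite.linearMap R R (s * f x * ·) ((B * unrolling f B n) x) := by
        simp only [Matrix.mul_apply_eq_vecMul, Matrix.vecMul_eq_sum, map_sum, map_smul]
      _ = FunOnFinite.linearMap R R (s * ·) (unrolling f B (n + 1) x) := by
        rw [unrolling_succ, ← comp_mul_left, FunOnFinite.linearMap_comp, LinearMap.comp_apply]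

theorem small_step_characterization_general [Fintype X] [DecidableEq X] [Fintype N]
    [DecidableEq N] [Monoid N] (f : X → N) {B : Matrix X X R} (hB : ∀ x, ∑ y, B x y = 1) (n : ℕ)
    (x : X) (b : N) :
    unrolling f B n x b = ∑ y, (smallStep f B ^ (n + 1)) (x, 1) (y, b) := by
  have h := congrFun (sum_smallStep_pow_apply f hB n x 1) b
  simpa [← Function.id_def] using h.symm

end

/-- Finite sets as a monoid under union. Mathlib has no such instance, since multiplication of
finsets is there the pointwise one. -/
abbrev unionMonoid (α : Type*) [DecidableEq α] : Monoid (Finset α) where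
  mul := (· ∪ ·)
  mul_assoc := Finset.union_assoc
  one := ∅
  one_mul := Finset.empty_union
  mul_one := Finset.union_empty

/-- The `(n+1)`-step behavior of the small-step chain started at `(a, ∅)` computes the
big-step matrix of the `n`-th unrolling:
`(M n)_{a,b} = ∑_{a'} (S^(n+1))_{(a,∅),(a',b)}`. -/
theorem small_step_characterization {Pk : Type*} [Fintype Pk] [DecidableEq Pk]
    (B : Matrix (Finset Pk) (Finset Pk) ℝ)
    (hBnn : ∀ a a', 0 ≤ B a a')
    (hBrow : ∀ a, ∑ a', B a a' = 1)
    (S : Matrix (Finset Pk × Finset Pk) (Finset Pk × Finset Pk) ℝ)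
    (hS : ∀ a b a' b', S (a, b) (a', b') = if b' = a ∪ b then B a a' else 0)
    (M : ℕ → Matrix (Finset Pk) (Finset Pk) ℝ)
    (hM0 : M 0 = 1)
    (hMsucc : ∀ n a b, M (n + 1) a b = ∑ c, (if b = a ∪ c then (1 : ℝ) else 0) * (B * M n) a c)
    (n : ℕ) (a b : Finset Pk) :
    M n a b = ∑ a', (S ^ (n + 1)) (a, (∅ : Finset Pk)) (a', b) := by
  let := unionMonoid Pk
  obtain rfl : S = smallStep id B :=
    Matrix.ext fun ⟨a, s⟩ ⟨a', t⟩ ↦ by rw [hS, Finset.union_comm]; rfl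
  obtain rfl : M = unrolling id B :=
    eq_unrolling (fun a ↦ by ext b; rw [hM0, Matrix.one_eq_pi_single]; rfl) hMsucc
  exact small_step_characterization_general id hBrow n a b
end

section
/- If M is substochastic and every state can reach a defective state, then, with n = |S| the cardinality of S, every row sum of M^n is strictly less than 1: for all s ∈ S, Σ_t (M^n)_{s,t} < 1. -/
/-!
The sum of row `s` of `A * B` is the sum of the row sums of `B` weighted by row `s` of `A`.
When `A` and `B` are substochastic it is therefore less than `1` exactly when row `s` of `A` is
defective or puts positive weight on a defective row of `B`. Applied to `M * M ^ k`, this shows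
that the set `D k` of defective rows of `M ^ k` determines `D (k + 1)`; applied to `M ^ k * M`,
that `D k ⊆ D (k + 1)` and that a state reaching a defective one in `k` steps lies in `D (k + 1)`.
An increasing sequence of subsets of `S` in which each term determines the next is constant from
index `|S|` on.
-/

section RowSums

variable {R l m n : Type*} [Fintype m] [Fintype n] [Semiring R]

lemma sum_row_mul (A : Matrix l m R) (B : Matrix m n R) (i : l) :
    ∑ k, (A * B) i k = ∑ j, A i j * ∑ k, B j k := by
  simp only [Matrix.mul_apply, Finset.mul_sum]
  exact Finset.sum_comm

variable [PartialOrder R]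

lemma sum_row_mul_le [IsOrderedRing R] {A : Matrix l m R} {B : Matrix m n R} {i : l}
    (hA : ∀ j, 0 ≤ A i j) (hB : ∀ j, ∑ k, B j k ≤ 1) :
    ∑ k, (A * B) i k ≤ ∑ j, A i j := by
  rw [sum_row_mul]
  exact Finset.sum_le_sum fun j _ ↦ mul_le_of_le_one_right (hA j) (hB j)

lemma sum_row_mul_lt [IsStrictOrderedRing R] {A : Matrix l m R} {B : Matrix m n R} {i : l} {j : m}
    (hA : ∀ j, 0 ≤ A i j) (hB : ∀ j, ∑ k, B j k ≤ 1) (hij : 0 < A i j) (hj : ∑ k, B j k < 1) :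
    ∑ k, (A * B) i k < ∑ j, A i j := by
  rw [sum_row_mul]
  exact Finset.sum_lt_sum (fun j _ ↦ mul_le_of_le_one_right (hA j) (hB j))
    ⟨j, Finset.mem_univ j, mul_lt_of_lt_one_right hij hj⟩

/-- The rows of a matrix whose sum is less than `1`: for a substochastic transition matrix, the
defective states. Rectangular matrices are allowed. -/
def defectiveRows (M : Matrix m n R) : Set m := {i | ∑ j, M i j < 1}

lemma mem_defectiveRows_mul [IsStrictOrderedRing R] {A : Matrix l m R} {B : Matrix m n R} {i : l}
    (hA : ∀ j, 0 ≤ A i j) (hAi : ∑ j, A i j ≤ 1) (hB : ∀ j, ∑ k, B j k ≤ 1) :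
    i ∈ defectiveRows (A * B) ↔
      i ∈ defectiveRows A ∨ ∃ j, 0 < A i j ∧ j ∈ defectiveRows B := by
  constructor
  · intro hi
    by_contra! ⟨hiA, hiB⟩
    have sum_A : ∑ j, A i j = 1 := hAi.eq_of_not_lt hiA
    have sum_AB : ∑ k, (A * B) i k = ∑ j, A i j := by
      rw [sum_row_mul]
      refine Finset.sum_congr rfl fun j _ ↦ ?_
      rcases (hA j).eq_or_lt with hij | hij
      · rw [← hij, zero_mul]
      · rw [(hB j).eq_of_not_lt (hiB j hij), mul_one]
    exact hi.ne (sum_AB.trans sum_A)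
  · rintro (hi | ⟨j, hij, hj⟩)
    · exact (sum_row_mul_le hA hB).trans_lt hi
    · exact (sum_row_mul_lt hA hB hij hj).trans_le hAi

end RowSums

section Stabilization

variable {α : Type*} [Finite α]

lemma subset_apply_card_of_monotone {D : ℕ → Set α} (hmono : Monotone D)
    (hstab : ∀ k, D k = D (k + 1) → D (k + 1) = D (k + 2)) (k : ℕ) :
    D k ⊆ D (Nat.card α) := by
  rcases le_total k (Nat.card α) with hk | hk
  · exact hmono hk
  have eq_of_ncard_eq {i j : ℕ} (hij : i ≤ j) (h : (D i).ncard = (D j).ncard) : D i = D j :=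
    Set.eq_of_subset_of_ncard_le (hmono hij) h.ge
  have ncard_eq : (D k).ncard = (D (Nat.card α)).ncard :=
    Nat.stabilises_of_monotone (f := fun i ↦ (D i).ncard)
      (fun _ _ hij ↦ Set.ncard_le_ncard (hmono hij)) (fun i ↦ (D i).ncard_le_card)
      (fun i h ↦ congrArg Set.ncard (hstab i (eq_of_ncard_eq i.le_succ h))) hk
  exact (eq_of_ncard_eq hk ncard_eq.symm).ge

end Stabilization

section Substochastic

/-- The monoid of row-substochastic matrices: nonnegative entries and row sums at most `1`.
Bundled as a submonoid so that powers stay inside it by `pow_mem`. -/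
def rowSubstochastic (R S : Type*) [Fintype S] [DecidableEq S] [Semiring R] [PartialOrder R]
    [IsOrderedRing R] : Submonoid (Matrix S S R) where
  carrier := {M | (∀ s t, 0 ≤ M s t) ∧ ∀ s, ∑ t, M s t ≤ 1}
  mul_mem' {A B} hA hB :=
    ⟨fun s t ↦ Finset.sum_nonneg fun u _ ↦ mul_nonneg (hA.1 s u) (hB.1 u t),
      fun s ↦ (sum_row_mul_le (hA.1 s) hB.2).trans (hA.2 s)⟩
  one_mem' := ⟨Matrix.zero_le_one_elem, fun s ↦ by simp [Matrix.one_apply]⟩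

variable {R S : Type*} [Fintype S] [DecidableEq S] [Semiring R] [PartialOrder R]
  [IsStrictOrderedRing R] {M : Matrix S S R}

lemma mem_defectiveRows_pow_succ (hM : M ∈ rowSubstochastic R S) (k : ℕ) (s : S) :
    s ∈ defectiveRows (M ^ (k + 1)) ↔
      s ∈ defectiveRows (M ^ k) ∨ ∃ t, 0 < (M ^ k) s t ∧ t ∈ defectiveRows M := by
  have hMk := pow_mem hM k
  rw [pow_succ]
  exact mem_defectiveRows_mul (hMk.1 s) (hMk.2 s) hM.2

lemma mem_defectiveRows_pow_succ' (hM : M ∈ rowSubstochastic R S) (k : ℕ) (s : S) :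
    s ∈ defectiveRows (M ^ (k + 1)) ↔
      s ∈ defectiveRows M ∨ ∃ t, 0 < M s t ∧ t ∈ defectiveRows (M ^ k) := by
  rw [pow_succ']
  exact mem_defectiveRows_mul (hM.1 s) (hM.2 s) (pow_mem hM k).2

lemma monotone_defectiveRows_pow (hM : M ∈ rowSubstochastic R S) :
    Monotone fun k ↦ defectiveRows (M ^ k) :=
  monotone_nat_of_le_succ fun k s hs ↦ (mem_defectiveRows_pow_succ hM k s).2 (Or.inl hs)

lemma defectiveRows_pow_succ_congr (hM : M ∈ rowSubstochastic R S) {i j : ℕ}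
    (h : defectiveRows (M ^ i) = defectiveRows (M ^ j)) :
    defectiveRows (M ^ (i + 1)) = defectiveRows (M ^ (j + 1)) := by
  ext s
  rw [mem_defectiveRows_pow_succ' hM, mem_defectiveRows_pow_succ' hM, h]

lemma defectiveRows_pow_subset_pow_card (hM : M ∈ rowSubstochastic R S) (k : ℕ) :
    defectiveRows (M ^ k) ⊆ defectiveRows (M ^ Fintype.card S) := by
  rw [← Nat.card_eq_fintype_card]
  exact subset_apply_card_of_monotone (monotone_defectiveRows_pow hM)
    (fun _ ↦ defectiveRows_pow_succ_congr hM) k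

theorem pow_card_row_sums_lt_one_general (hnn : ∀ s t, 0 ≤ M s t) (hsub : ∀ s, ∑ t, M s t ≤ 1)
    {s : S} (hreach : ∃ (n : ℕ) (t : S), (∑ u, M t u < 1) ∧ 0 < (M ^ n) s t) :
    ∑ t, (M ^ Fintype.card S) s t < 1 := by
  have hM : M ∈ rowSubstochastic R S := ⟨hnn, hsub⟩
  obtain ⟨n, t, ht, hst⟩ := hreach
  have hs : s ∈ defectiveRows (M ^ (n + 1)) :=
    (mem_defectiveRows_pow_succ hM n s).2 (Or.inr ⟨t, hst, ht⟩)
  exact defectiveRows_pow_subset_pow_card hM (n + 1) hs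

end Substochastic

/-- If `M` is substochastic and every state can reach a defective state, then with
`n = |S|`, every row sum of `M ^ n` is strictly less than `1`. -/
theorem pow_card_row_sums_lt_one {S : Type*} [Fintype S] [DecidableEq S]
    (M : Matrix S S ℝ)
    (hnn : ∀ s t, 0 ≤ M s t)
    (hsub : ∀ s, ∑ t, M s t ≤ 1)
    (hreach : ∀ s, ∃ (n : ℕ) (t : S), (∑ u, M t u < 1) ∧ 0 < (M ^ n) s t) :
    ∀ s, ∑ t, (M ^ Fintype.card S) s t < 1 :=
  fun s ↦ pow_card_row_sums_lt_one_general hnn hsub (hreach s)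
end
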